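/- Let α satisfy 0 < α_m < 1 for all m. Then all M partial derivatives of SNR at α vanish if and only if the stationarity condition SNR(α) = (α_m)² · L · s_m + 2 · α_m − 1 holds for every m. -/

import Mathlib

/-- Non-coherent combined SNR of the uplink JR-CoMP network:
`L` is the number of symbols per channel coherence interval, `s m` the per-BS
received SNR, `α m` the pilot-symbol ratio at BS `m`. -/
noncomputable def SNR (L : ℝ) {M : ℕ} (s α : Fin M → ℝ) : ℝ :=
  (∑ m, (1 - α m) * s m * (α m * L * s m) / (1 + α m * L * s m)) /
  (∑ m, s m / (1 + α m * L * s m) + M)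

/-!
Moving only `α m` changes a single summand of the numerator and of the denominator of `SNR`, so the
quotient is stationary in that coordinate iff it equals the ratio of the derivatives of these two
summands. Writing `v t = s / (1 + t L s)`, we have `v' = -L v ^ 2`, and the numerator summand
`(1 - t) (s - v t)` has derivative `(t ^ 2 L s + 2 t - 1) v'`; hence the ratio is
`t ^ 2 L s + 2 t - 1`.
-/

section Calculus

variable {𝕜 : Type*} [NontriviallyNormedField 𝕜]

theorem hasDerivAt_div_zero_iff {f g : 𝕜 → 𝕜} {f' g' x : 𝕜} (hf : HasDerivAt f f' x)
    (hg : HasDerivAt g g' x) (hgx : g x ≠ 0) (hg' : g' ≠ 0) :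
    HasDerivAt (fun t => f t / g t) 0 x ↔ f x / g x = f' / g' := by
  have hquot : HasDerivAt (fun t => f t / g t) ((f' * g x - f x * g') / g x ^ 2) x :=
    hf.fun_div hg hgx
  have hzero : (f' * g x - f x * g') / g x ^ 2 = 0 ↔ f x / g x = f' / g' := by
    rw [div_eq_zero_iff, or_iff_left (pow_ne_zero 2 hgx), sub_eq_zero, div_eq_div_iff hgx hg',
      eq_comm]
  rw [← hzero]
  exact ⟨hquot.unique, hquot.congr_deriv⟩

theorem hasDerivAt_sum_update {ι E : Type*} [Fintype ι] [DecidableEq ι] [NormedAddCommGroup E]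
    [NormedSpace 𝕜 E] {F : ι → 𝕜 → E} {x : ι → 𝕜} {i : ι} {d : E} (h : HasDerivAt (F i) d (x i)) :
    HasDerivAt (fun t => ∑ j, F j (Function.update x i t j)) d (x i) := by
  simp only [Function.apply_update F, Finset.sum_update_of_mem (Finset.mem_univ i)]
  exact h.add_const _

end Calculus

/-- The useful signal power of one BS with received SNR `s` and pilot-symbol ratio `t`, that is, its
summand in the numerator of `SNR`. -/
noncomputable def signalTerm (L s t : ℝ) : ℝ :=
  (1 - t) * s * (t * L * s) / (1 + t * L * s)

/-- The channel-estimation error power of one BS with received SNR `s` and pilot-symbol ratio `t`,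
that is, its summand in the denominator of `SNR` (without the constant `M`). -/
noncomputable def errorTerm (L s t : ℝ) : ℝ :=
  s / (1 + t * L * s)

section Terms

variable {L s t : ℝ}

theorem errorTerm_mul_cancel (h : 1 + t * L * s ≠ 0) : errorTerm L s t * (1 + t * L * s) = s :=
  div_mul_cancel₀ s h

theorem signalTerm_eq (h : 1 + t * L * s ≠ 0) :
    signalTerm L s t = (1 - t) * (s - errorTerm L s t) :=
  calc
    signalTerm L s t = (1 - t) * (errorTerm L s t * (t * L * s)) := by
      rw [signalTerm, errorTerm]
      ring
    _ = (1 - t) * (s - errorTerm L s t) := by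
      linear_combination (1 - t) * errorTerm_mul_cancel h

theorem hasDerivAt_errorTerm (h : 1 + t * L * s ≠ 0) :
    HasDerivAt (errorTerm L s) (-(L * errorTerm L s t ^ 2)) t := by
  have hlin : HasDerivAt (fun t => 1 + t * L * s) (L * s) t := by
    simpa using (((hasDerivAt_id t).mul_const L).mul_const s).const_add 1
  refine ((hasDerivAt_const t s).fun_div hlin h).congr_deriv ?_
  rw [errorTerm, div_pow]
  ring

theorem hasDerivAt_signalTerm (h : 1 + t * L * s ≠ 0) :
    HasDerivAt (signalTerm L s) ((t ^ 2 * L * s + 2 * t - 1) * -(L * errorTerm L s t ^ 2)) t := by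
  have hne : ∀ᶠ u in nhds t, 1 + u * L * s ≠ 0 :=
    ContinuousAt.eventually_ne (by fun_prop) h
  have hprod := ((hasDerivAt_id' t).const_sub 1).fun_mul ((hasDerivAt_errorTerm h).const_sub s)
  refine (hprod.congr_of_eventuallyEq (hne.mono fun _ => signalTerm_eq)).congr_deriv ?_
  linear_combination (1 + errorTerm L s t * t * L) * errorTerm_mul_cancel h

end Terms

section SNR

variable {L : ℝ} {M : ℕ} {s α : Fin M → ℝ}

theorem SNR_eq_sum_div_sum :
    SNR L s α = (∑ m, signalTerm L (s m) (α m)) / (∑ m, errorTerm L (s m) (α m) + M) :=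
  rfl

theorem sum_errorTerm_add_pos (hM : 0 < M) (hs : ∀ m, 0 ≤ s m)
    (hα : ∀ m, 0 < 1 + α m * L * s m) : 0 < ∑ m, errorTerm L (s m) (α m) + (M : ℝ) :=
  add_pos_of_nonneg_of_pos (Finset.sum_nonneg fun m _ => div_nonneg (hs m) (hα m).le)
    (Nat.cast_pos.mpr hM)

theorem SNR_stationarity_condition_general (hL : L ≠ 0) (hs : ∀ m, 0 ≤ s m)
    (hα : ∀ m, 0 < 1 + α m * L * s m) {m : Fin M} (hm : s m ≠ 0) :
    HasDerivAt (fun t => SNR L s (Function.update α m t)) 0 (α m) ↔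
      SNR L s α = α m ^ 2 * L * s m + 2 * α m - 1 := by
  have hq : 1 + α m * L * s m ≠ 0 := (hα m).ne'
  have herror' : -(L * errorTerm L (s m) (α m) ^ 2) ≠ 0 :=
    neg_ne_zero.mpr (mul_ne_zero hL (pow_ne_zero 2 (div_ne_zero hm hq)))
  have hsignal := hasDerivAt_sum_update (F := fun j => signalTerm L (s j))
    (hasDerivAt_signalTerm hq)
  have herror := (hasDerivAt_sum_update (F := fun j => errorTerm L (s j))
    (hasDerivAt_errorTerm hq)).add_const (M : ℝ)
  have hpos := sum_errorTerm_add_pos m.pos hs hα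
  have hiff := hasDerivAt_div_zero_iff hsignal herror
    (by simpa only [Function.update_eq_self] using hpos.ne') herror'
  simpa only [SNR_eq_sum_div_sum, Function.update_eq_self, mul_div_cancel_right₀ _ herror']
    using hiff

end SNR

/-- For an interior point `α` (all coordinates in `(0,1)`), all `M` partial
derivatives of the combined SNR vanish at `α` iff the stationarity condition
`SNR α = αₘ² L sₘ + 2 αₘ − 1` holds for every `m`. -/
theorem SNR_stationarity_condition
    (L : ℝ) (hL : 0 < L) (M : ℕ) (hM : 0 < M) (s : Fin M → ℝ) (hs : ∀ m, 0 < s m)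
    (α : Fin M → ℝ) (hα : ∀ m, α m ∈ Set.Ioo (0 : ℝ) 1) :
    (∀ m, HasDerivAt (fun t => SNR L s (Function.update α m t)) 0 (α m)) ↔
    (∀ m, SNR L s α = (α m) ^ 2 * L * s m + 2 * α m - 1) := by
  have hq (m : Fin M) : 0 < 1 + α m * L * s m := by
    have := hs m
    have := (hα m).1
    positivity
  exact forall_congr' fun m =>
    SNR_stationarity_condition_general hL.ne' (fun j => (hs j).le) hq (hs m).ne'
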